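/- Let k ≥ 1 be an integer and let G be a simple graph of order n ≥ max{6k+11, (k+3)(k+4)/2}. If ρ(G) ≥ ρ(L_{n,k}), then G contains a cycle C_ℓ for every integer ℓ with 3 ≤ ℓ ≤ n−k+1, unless G is isomorphic to L_{n,k}. -/

import Mathlib

open SimpleGraph

/-- `G` contains a cycle of length `l`. -/
def HasCycleLen {V : Type} (G : SimpleGraph V) (l : ℕ) : Prop :=
  ∃ (v : V) (c : G.Walk v v), c.IsCycle ∧ c.length = l

/-- The circumference of `G`: the length of a longest cycle. -/
noncomputable def circumference {V : Type} (G : SimpleGraph V) : ℕ :=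
  sSup {l | HasCycleLen G l}

/-- `G` is weakly pancyclic with girth 3: it contains a cycle of every length `l`
with `3 ≤ l ≤ c(G)`. -/
def WeaklyPancyclic3 {V : Type} (G : SimpleGraph V) : Prop :=
  HasCycleLen G 3 ∧ ∀ l : ℕ, 3 ≤ l → l ≤ circumference G → HasCycleLen G l

/-- The number of edges of `G`. -/
noncomputable def edgeCount {V : Type} (G : SimpleGraph V) : ℕ :=
  Nat.card G.edgeSet

/-- The degree of `v` in `G`. -/
noncomputable def degCount {V : Type} (G : SimpleGraph V) (v : V) : ℕ :=
  Nat.card (G.neighborSet v)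

/-- The spectral radius of `G`: the largest eigenvalue of the adjacency matrix. -/
noncomputable def specRad {V : Type} [Finite V] (G : SimpleGraph V) : ℝ :=
  letI := Fintype.ofFinite V
  letI := Classical.decEq V
  letI := Classical.decRel G.Adj
  sSup (spectrum ℝ (G.adjMatrix ℝ))

/-- The signless Laplacian spectral radius of `G`: the largest eigenvalue of `D(G) + A(G)`. -/
noncomputable def qSpecRad {V : Type} [Finite V] (G : SimpleGraph V) : ℝ :=
  letI := Fintype.ofFinite V
  letI := Classical.decEq V
  letI := Classical.decRel G.Adj
  sSup (spectrum ℝ (Matrix.diagonal (fun v => (degCount G v : ℝ)) + G.adjMatrix ℝ))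

/-- `L_{n,k} = K_1 ∨ (K_{n-k-1} + K_k)`: vertex `0` is the common vertex of a clique on
the `n - k` vertices `{0, …, n-k-1}` and a clique on the `k+1` vertices `{0} ∪ {n-k, …, n-1}`. -/
def Lgraph (n k : ℕ) : SimpleGraph (Fin n) :=
  SimpleGraph.fromRel (fun u v =>
    u.val = 0 ∨ v.val = 0 ∨ (u.val < n - k ∧ v.val < n - k) ∨
      (n - k ≤ u.val ∧ n - k ≤ v.val))

/-- `Γ_{n,t} = K_2 ∨ (K_{n-2-t} + t·K_1)`: vertices `0,1` are joined to everything,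
vertices `2, …, n-t-1` form a clique, and vertices `n-t, …, n-1` are independent. -/
def GammaGraph (n t : ℕ) : SimpleGraph (Fin n) :=
  SimpleGraph.fromRel (fun u v =>
    u.val < 2 ∨ v.val < 2 ∨ (u.val < n - t ∧ v.val < n - t))

/-- `F` is a member of the family `F_{n,k}`: there is a clique `K` on `n - k` vertices
such that each connected component of `F - K` is a clique all of whose vertices are
adjacent to one single common vertex of `K` and to no other vertex of `K`. -/
def MemF (n k : ℕ) (F : SimpleGraph (Fin n)) : Prop :=
  ∃ K : Finset (Fin n), K.card = n - k ∧ F.IsClique (↑K : Set (Fin n)) ∧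
    (∀ u v : ({x : Fin n | x ∉ K} : Set (Fin n)),
      (F.induce {x : Fin n | x ∉ K}).Reachable u v → (u = v ∨ F.Adj u.1 v.1)) ∧
    (∀ u : ({x : Fin n | x ∉ K} : Set (Fin n)), ∃! w : Fin n, w ∈ K ∧ F.Adj u.1 w) ∧
    (∀ u v : ({x : Fin n | x ∉ K} : Set (Fin n)),
      (F.induce {x : Fin n | x ∉ K}).Reachable u v →
        ∀ w ∈ K, F.Adj u.1 w → F.Adj v.1 w)

/-- `G` is a subgraph of `H` (up to relabelling): there is an injective graph
homomorphism from `G` to `H`. -/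
def IsSubgraphOf {n : ℕ} (G H : SimpleGraph (Fin n)) : Prop :=
  ∃ f : G →g H, Function.Injective f

/-!
Write `h = n - k` and `ρ = specRad G`. As `L_{n,k}` contains a clique on `h` vertices, `ρ ≥ h - 1`.
If `u` has the largest entry in a Perron vector of `G`, comparing entries after two steps from `u`
gives `ρ² ≤ ∑_{w ~ u} deg w`, hence Hong's inequality `ρ² ≤ 2e - s + 1`, where `s` is the number of
non-isolated vertices and `e` the number of edges. So `G` misses few edges of a clique on `h`
vertices.

Among all sets of `h + 1` vertices let `S` span the most edges, and let `w` be a vertex of smallest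
degree `d` in `G[S]`. If `d ≥ 2`, the edge count is large enough for `G[S]` to be Hamiltonian by the
Pósa-Erdős condition, and then pancyclic by Bondy's theorem. If `d ≤ 1`, then by the maximality of
`S` every vertex outside `T = S \ {w}` has at most one neighbour in `T`. In that case let `w'` be a
vertex of `T` with the largest entry in a Perron vector of `G`. Redirecting to `w'` all edges
between `T` and its complement, and completing both sides, does not decrease the Rayleigh quotient
of that vector. The result is a copy of `L_{n,k}`, and equality forces it to be `G`.
-/

open Finset

section Cycles

variable {V : Type} {G : SimpleGraph V} {m : ℕ} {f : ℕ → V}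

/-- The vertices `f 0, …, f (m - 1)` form a path of `G` on `m` vertices. Sequences indexed by `ℕ`,
with arbitrary values from `m` on, make it easy to cut and reassemble paths. -/
structure IsPathSeq (G : SimpleGraph V) (m : ℕ) (f : ℕ → V) : Prop where
  injOn : Set.InjOn f (Set.Iio m)
  adj : ∀ i, i + 1 < m → G.Adj (f i) (f (i + 1))

namespace IsPathSeq

lemma eq_of_eq (hf : IsPathSeq G m f) {i j : ℕ} (hi : i < m) (hj : j < m) (h : f i = f j) :
    i = j :=
  hf.injOn hi hj h

lemma hasCycleLen (hf : IsPathSeq G m f) (hm : 3 ≤ m) (hclose : G.Adj (f (m - 1)) (f 0)) :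
    HasCycleLen G m := by
  obtain ⟨m, rfl⟩ : ∃ r, m = r + 2 := ⟨m - 2, by omega⟩
  have adj_succ (a : Fin (m + 2)) : G.Adj (f a) (f (a + 1 : Fin (m + 2))) := by
    rw [Fin.val_add_one]
    split_ifs with ha
    · simpa [ha] using hclose
    · exact hf.adj a (by have := Fin.val_lt_last ha; omega)
  refine (cycleGraph_isContained_iff (by omega)).1 ⟨⟨⟨fun a => f a, fun {a b} hab => ?_⟩, ?_⟩⟩
  · rcases cycleGraph_adj.1 hab with h | h
    · exact sub_eq_iff_eq_add'.1 h ▸ (adj_succ b).symm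
    · exact sub_eq_iff_eq_add'.1 h ▸ adj_succ a
  · exact fun a b hab => Fin.ext (hf.eq_of_eq a.2 b.2 hab)

/-- The cycle is `f 0, …, f i, f (m - 1), f (m - 2), …, f j`. -/
lemma hasCycleLen_of_crossing (hf : IsPathSeq G m f) {i j : ℕ} (hij : i < j) (hj : j < m)
    (h0j : G.Adj (f 0) (f j)) (hi : G.Adj (f (m - 1)) (f i)) (hlen : 3 ≤ i + 1 + (m - j)) :
    HasCycleLen G (i + 1 + (m - j)) := by
  refine hasCycleLen (f := fun t => if t ≤ i then f t else f (m + i - t))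
    ⟨fun a ha b hb hab => ?_, fun a ha => ?_⟩ hlen ?_
  · rw [Set.mem_Iio] at ha hb
    split_ifs at hab <;> have := hf.eq_of_eq (by omega) (by omega) hab <;> omega
  · split_ifs with h h' h'
    · exact hf.adj a (by omega)
    · rw [show m + i - (a + 1) = m - 1 by omega, show a = i by omega]
      exact hi.symm
    · omega
    · rw [show m + i - a = m + i - (a + 1) + 1 by omega]
      exact (hf.adj _ (by omega)).symm
  · rw [if_neg (by omega), if_pos (Nat.zero_le i),
      show m + i - (i + 1 + (m - j) - 1) = j by omega]
    exact h0j.symm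

/-- The cycle is `f 0, f i, f (i + 1), …, f j, f (m - 1)`. -/
lemma hasCycleLen_of_chords (hf : IsPathSeq G m f) (hclose : G.Adj (f (m - 1)) (f 0)) {i j : ℕ}
    (h0 : 0 < i) (hij : i ≤ j) (hj : j < m - 1) (h0i : G.Adj (f 0) (f i))
    (hj' : G.Adj (f (m - 1)) (f j)) : HasCycleLen G (j - i + 3) := by
  refine hasCycleLen (m := j - i + 3)
    (f := fun t => if t = 0 then f 0 else if t = j - i + 2 then f (m - 1) else f (i + t - 1))
    ⟨fun a ha b hb hab => ?_, fun a ha => ?_⟩ (by omega) (by simpa using hclose)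
  · rw [Set.mem_Iio] at ha hb
    split_ifs at hab <;> first
      | omega
      | have := hf.eq_of_eq (by omega) (by omega) hab; omega
  · rw [if_neg (Nat.succ_ne_zero a), if_neg (show a ≠ j - i + 2 by omega)]
    split_ifs with ha0 ha1 ha1
    · omega
    · simpa [ha0] using h0i
    · rw [show i + a - 1 = j by omega]
      exact hj'.symm
    · rw [show i + (a + 1) - 1 = i + a - 1 + 1 by omega]
      exact hf.adj _ (by omega)

variable [Fintype V]

lemma image_range_eq_univ [DecidableEq V] (hf : IsPathSeq G (Fintype.card V) f) :
    (range (Fintype.card V)).image f = univ := by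
  refine eq_univ_of_card _ ?_
  rw [card_image_of_injOn (by simpa using hf.injOn), card_range]

lemma degree_eq_card_filter [DecidableRel G.Adj] (hf : IsPathSeq G (Fintype.card V) f) (v : V) :
    G.degree v = #{i ∈ range (Fintype.card V) | G.Adj v (f i)} := by
  classical
  rw [← card_neighborFinset_eq_degree, neighborFinset_eq_filter, ← hf.image_range_eq_univ,
    filter_image, card_image_of_injOn]
  exact hf.injOn.mono fun i hi => by simpa using (mem_filter.1 (mem_coe.1 hi)).1

end IsPathSeq

lemma HasCycleLen.three_le (h : HasCycleLen G m) : 3 ≤ m := by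
  obtain ⟨v, c, hc, rfl⟩ := h
  exact hc.three_le_length

lemma HasCycleLen.map {W : Type} {H : SimpleGraph W} (h : HasCycleLen G m) (φ : G ↪g H) :
    HasCycleLen H m := by
  obtain ⟨v, c, hc, rfl⟩ := h
  exact ⟨φ v, c.map φ.toHom, hc.map φ.injective, c.length_map _⟩

lemma HasCycleLen.exists_cyclic_injective (h : HasCycleLen G m) :
    ∃ f : ZMod m → V, Function.Injective f ∧ ∀ i, G.Adj (f i) (f (i + 1)) := by
  have hm := h.three_le
  obtain ⟨φ⟩ := (cycleGraph_isContained_iff (by omega)).2 h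
  obtain ⟨m, rfl⟩ : ∃ r, m = r + 2 := ⟨m - 2, by omega⟩
  exact ⟨φ, φ.injective, fun i => φ.toHom.map_adj <|
    cycleGraph_adj.2 <| .inr <| add_sub_cancel_left (G := ZMod (m + 2)) i 1⟩

lemma exists_isPathSeq_of_cyclic [NeZero m] {f : ZMod m → V} (hf : Function.Injective f)
    (hadj : ∀ i, G.Adj (f i) (f (i + 1))) (i : ZMod m) :
    ∃ g, IsPathSeq G m g ∧ g 0 = f (i + 1) ∧ g (m - 1) = f i := by
  refine ⟨fun t => f (i + 1 + t), ⟨fun _ ha _ hb hab => ?_, fun t _ => ?_⟩, by simp, ?_⟩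
  · exact CharP.natCast_injOn_Iio (ZMod m) m ha hb (add_left_cancel (hf hab))
  · simpa [add_assoc] using hadj (i + 1 + t)
  · simp [Nat.cast_pred (NeZero.pos m)]

end Cycles

section Pancyclicity

variable {V : Type} [Fintype V] {G : SimpleGraph V} [DecidableRel G.Adj]

namespace IsPathSeq

variable {f : ℕ → V}

lemma degree_le_card_filter_Ico (hf : IsPathSeq G (Fintype.card V) f) {i : ℕ}
    (hi : i = 0 ∨ i = Fintype.card V - 1) :
    G.degree (f i) ≤ #{j ∈ Ico 1 (Fintype.card V - 1) | G.Adj (f i) (f j)} + 1 := by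
  rw [hf.degree_eq_card_filter]
  refine (card_le_card fun j hj => ?_).trans (card_insert_le (Fintype.card V - 1 - i) _)
  obtain ⟨hj, hadj⟩ := mem_filter.1 hj
  have hji : j ≠ i := fun h => G.irrefl (h ▸ hadj)
  rw [mem_range] at hj
  rw [mem_insert, mem_filter, mem_Ico]
  by_cases hj' : j = Fintype.card V - 1 - i
  · exact .inl hj'
  · exact .inr ⟨by omega, hadj⟩

/-- Bondy's argument: if there is no `l`-cycle, then a neighbour `f j` of `f 0` forbids the
neighbour `f (j + l - 3)` of `f (m - 1)`, where indices that overflow are shifted back by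
`m - 2`. -/
lemma hasCycleLen_of_card_lt_degree_add_degree (hf : IsPathSeq G (Fintype.card V) f)
    (hclose : G.Adj (f (Fintype.card V - 1)) (f 0))
    (hdeg : Fintype.card V < G.degree (f 0) + G.degree (f (Fintype.card V - 1)))
    {l : ℕ} (hl : 3 ≤ l) (hlV : l ≤ Fintype.card V) : HasCycleLen G l := by
  set m := Fintype.card V
  let A := {j ∈ Ico 1 (m - 1) | G.Adj (f 0) (f j)}
  let B := {j ∈ Ico 1 (m - 1) | G.Adj (f (m - 1)) (f j)}
  have hA : G.degree (f 0) ≤ #A + 1 := hf.degree_le_card_filter_Ico (.inl rfl)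
  have hB : G.degree (f (m - 1)) ≤ #B + 1 := hf.degree_le_card_filter_Ico (.inr rfl)
  let shift (j : ℕ) : ℕ := if j + l ≤ m + 1 then j + l - 3 else j + l - 1 - m
  have hAIco {j : ℕ} (hj : j ∈ A) : 1 ≤ j ∧ j < m - 1 := mem_Ico.1 (mem_filter.1 hj).1
  have shift_injOn : Set.InjOn shift A := by
    intro a ha b hb hab
    have := hAIco ha
    have := hAIco hb
    simp only [shift] at hab
    split_ifs at hab <;> omega
  have shift_image : A.image shift ⊆ Ico 1 (m - 1) := by
    refine image_subset_iff.2 fun j hj => mem_Ico.2 ?_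
    have := hAIco hj
    simp only [shift]
    split_ifs <;> omega
  have hBIco : B ⊆ Ico 1 (m - 1) := filter_subset _ _
  obtain ⟨_, hshift⟩ := inter_nonempty_of_card_lt_card_add_card shift_image hBIco
    (by rw [card_image_of_injOn shift_injOn, Nat.card_Ico]; omega)
  obtain ⟨hshiftA, hshiftB⟩ := mem_inter.1 hshift
  obtain ⟨j, hj, rfl⟩ := mem_image.1 hshiftA
  have hj0 : G.Adj (f 0) (f j) := (mem_filter.1 hj).2
  have hjm : G.Adj (f (m - 1)) (f (shift j)) := (mem_filter.1 hshiftB).2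
  have hshiftIco := mem_Ico.1 (mem_filter.1 hshiftB).1
  have hjIco := hAIco hj
  simp only [shift] at hjm hshiftIco
  split_ifs at hjm hshiftIco with hjl
  · convert hf.hasCycleLen_of_chords hclose hjIco.1 (by omega) hshiftIco.2 hj0 hjm using 1
    omega
  · convert hf.hasCycleLen_of_crossing (by omega) (by omega) hj0 hjm (by omega) using 1
    omega

end IsPathSeq

lemma hasCycleLen_of_sq_card_lt_four_mul_card_edgeFinset
    (hham : HasCycleLen G (Fintype.card V)) (hE : Fintype.card V ^ 2 < 4 * #G.edgeFinset)
    {l : ℕ} (hl : 3 ≤ l) (hlV : l ≤ Fintype.card V) : HasCycleLen G l := by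
  have : NeZero (Fintype.card V) := ⟨by omega⟩
  obtain ⟨f, hf, hadj⟩ := hham.exists_cyclic_injective
  have hbij : Function.Bijective f :=
    hf.bijective_of_nat_card_le (by rw [Nat.card_zmod, Nat.card_eq_fintype_card])
  have hsum : ∑ i, G.degree (f i) = 2 * #G.edgeFinset := by
    rw [hbij.sum_comp (G.degree ·), G.sum_degrees_eq_twice_card_edges]
  have hsum' : ∑ i, G.degree (f (i + 1)) = 2 * #G.edgeFinset := by
    rw [← hsum]
    exact Equiv.sum_comp (Equiv.addRight 1) fun i => G.degree (f i)
  obtain ⟨i, -, hi⟩ : ∃ i ∈ univ, Fintype.card V < G.degree (f (i + 1)) + G.degree (f i) := by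
    refine exists_lt_of_sum_lt ?_
    rw [sum_add_distrib, hsum, hsum', sum_const, card_univ, ZMod.card, smul_eq_mul]
    linarith
  obtain ⟨g, hg, hg0, hglast⟩ := exists_isPathSeq_of_cyclic hf hadj i
  refine hg.hasCycleLen_of_card_lt_degree_add_degree ?_ ?_ hl hlV
  · rw [hg0, hglast]
    exact hadj i
  · rwa [hg0, hglast]

end Pancyclicity

section Hamiltonicity

variable {V : Type} {G : SimpleGraph V}

namespace IsPathSeq

variable {m : ℕ} {f : ℕ → V}

lemma reverse (hf : IsPathSeq G m f) : IsPathSeq G m (fun t => f (m - 1 - t)) where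
  injOn := fun a ha b hb hab => by
    rw [Set.mem_Iio] at ha hb
    have := hf.eq_of_eq (by omega) (by omega) hab
    omega
  adj := fun i hi => by
    rw [show m - 1 - i = m - 1 - (i + 1) + 1 by omega]
    exact (hf.adj _ (by omega)).symm

lemma of_sup_edge {u v : V} (hf : IsPathSeq (G ⊔ edge u v) m f) (hm : 3 ≤ m) (hu : f 0 = u)
    (hv : f (m - 1) = v) : IsPathSeq G m f where
  injOn := hf.injOn
  adj := fun i hi => by
    have hadj := hf.adj i hi
    rw [sup_adj, edge_adj, ← hu, ← hv] at hadj
    rcases hadj with h | ⟨⟨h, h'⟩ | ⟨h, -⟩, -⟩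
    · exact h
    · have := hf.eq_of_eq (by omega) (by omega) h
      have := hf.eq_of_eq (by omega) (by omega) h'
      omega
    · have := hf.eq_of_eq (by omega) (by omega) h
      omega

lemma exists_finset_card_eq_degree_forall_not_adj [Fintype V] [DecidableRel G.Adj]
    (hf : IsPathSeq G (Fintype.card V) f) (hV : 3 ≤ Fintype.card V)
    (hham : ¬ HasCycleLen G (Fintype.card V)) :
    ∃ J : Finset V, #J = G.degree (f 0) ∧
      ∀ x ∈ J, x ≠ f (Fintype.card V - 1) ∧ ¬ G.Adj (f (Fintype.card V - 1)) x := by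
  classical
  set m := Fintype.card V
  have hI : ∀ i ∈ {i ∈ range m | G.Adj (f 0) (f i)}, 0 < i ∧ i < m ∧ G.Adj (f 0) (f i) := by
    intro i hi
    obtain ⟨him, hadj⟩ := mem_filter.1 hi
    exact ⟨Nat.pos_of_ne_zero fun h => G.irrefl (h ▸ hadj), mem_range.1 him, hadj⟩
  refine ⟨{i ∈ range m | G.Adj (f 0) (f i)}.image (fun i => f (i - 1)), ?_, fun x hx => ?_⟩
  · rw [hf.degree_eq_card_filter, card_image_of_injOn]
    intro a ha b hb hab
    have := hI a ha
    have := hI b hb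
    have := hf.eq_of_eq (by omega) (by omega) hab
    omega
  · obtain ⟨i, hi, rfl⟩ := mem_image.1 hx
    obtain ⟨hi0, him, hadj⟩ := hI i hi
    refine ⟨fun h => ?_, fun h => hham ?_⟩
    · have := hf.eq_of_eq (by omega) (by omega) h
      omega
    · convert hf.hasCycleLen_of_crossing (by omega) him hadj h (by omega) using 1
      omega

end IsPathSeq

lemma exists_isPathSeq_of_hasCycleLen_sup_edge {m : ℕ} {u v : V} (hG : ¬ HasCycleLen G m)
    (huv : HasCycleLen (G ⊔ edge u v) m) :
    ∃ f, IsPathSeq G m f ∧ f 0 = u ∧ f (m - 1) = v := by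
  have hm := huv.three_le
  have : NeZero m := ⟨by omega⟩
  obtain ⟨f, hf, hadj⟩ := huv.exists_cyclic_injective
  obtain ⟨i, hi⟩ : ∃ i, ¬ G.Adj (f i) (f (i + 1)) := by
    by_contra! h
    obtain ⟨g, hg, hg0, hglast⟩ := exists_isPathSeq_of_cyclic hf h 0
    exact hG (hg.hasCycleLen hm (hg0 ▸ hglast ▸ h 0))
  obtain ⟨g, hg, hg0, hglast⟩ := exists_isPathSeq_of_cyclic hf hadj i
  rcases ((edge_adj ..).1 ((hadj i).resolve_left hi)).1 with ⟨hu, hv⟩ | ⟨hv, hu⟩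
  · rw [edge_comm] at hg
    exact ⟨_, (hg.of_sup_edge hm (hg0.trans hv) (hglast.trans hu)).reverse, hglast.trans hu,
      by simpa using hg0.trans hv⟩
  · exact ⟨g, hg.of_sup_edge hm (hg0.trans hu) (hglast.trans hv), hg0.trans hu, hglast.trans hv⟩

lemma hasCycleLen_card_of_forall_ne_adj [Fintype V] (hV : 3 ≤ Fintype.card V)
    (hG : ∀ u v, u ≠ v → G.Adj u v) : HasCycleLen G (Fintype.card V) := by
  refine (cycleGraph_isContained_iff (by omega)).1 ⟨⟨⟨(Fintype.equivFin V).symm, fun h => ?_⟩, ?_⟩⟩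
  · exact hG _ _ ((Fintype.equivFin V).symm.injective.ne h.ne)
  · exact (Fintype.equivFin V).symm.injective

variable [Fintype V] [DecidableRel G.Adj]

lemma exists_not_adj_forall_degree_add_degree_le (hG : ∃ u v, u ≠ v ∧ ¬ G.Adj u v) :
    ∃ u v, u ≠ v ∧ ¬ G.Adj u v ∧ G.degree u ≤ G.degree v ∧
      ∀ a b, a ≠ b → ¬ G.Adj a b → G.degree a + G.degree b ≤ G.degree u + G.degree v := by
  classical
  obtain ⟨a, b, hab⟩ := hG
  obtain ⟨⟨u, v⟩, huv, hmax⟩ := exists_max_image {q : V × V | q.1 ≠ q.2 ∧ ¬ G.Adj q.1 q.2}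
    (fun q => G.degree q.1 + G.degree q.2) ⟨(a, b), by simpa using hab⟩
  simp only [mem_filter, mem_univ, true_and, Prod.forall, and_imp] at huv hmax
  rcases le_total (G.degree u) (G.degree v) with h | h
  · exact ⟨u, v, huv.1, huv.2, h, hmax⟩
  · refine ⟨v, u, huv.1.symm, fun h => huv.2 h.symm, h, fun a b hab hnadj => ?_⟩
    rw [add_comm (G.degree v)]
    exact hmax a b hab hnadj

/-- Pósa's degree condition. The exceptional set consists of the predecessors, on a Hamiltonian path
from `u` to `v`, of the neighbours of `u`, where `u` and `v` are nonadjacent with maximal degree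
sum. -/
lemma exists_finset_forall_degree_le_card (hV : 3 ≤ Fintype.card V)
    (hham : ¬ HasCycleLen G (Fintype.card V))
    (hmax : ∀ u v, u ≠ v → ¬ G.Adj u v → HasCycleLen (G ⊔ edge u v) (Fintype.card V)) :
    ∃ J : Finset V, G.minDegree ≤ #J ∧ 2 * #J < Fintype.card V ∧ ∀ x ∈ J, G.degree x ≤ #J := by
  classical
  obtain ⟨u, v, huv, hnadj, hle, hdeg⟩ := exists_not_adj_forall_degree_add_degree_le (G := G) <| by
    by_contra! h
    exact hham (hasCycleLen_card_of_forall_ne_adj hV h)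
  obtain ⟨f, hf, hfu, hfv⟩ := exists_isPathSeq_of_hasCycleLen_sup_edge hham (hmax u v huv hnadj)
  obtain ⟨J, hJcard, hJ⟩ := hf.exists_finset_card_eq_degree_forall_not_adj hV hham
  rw [hfu] at hJcard
  rw [hfv] at hJ
  refine ⟨J, hJcard ▸ G.minDegree_le_degree u, ?_, fun x hx => ?_⟩
  · have hsub : G.neighborFinset v ⊆ (insert v J)ᶜ := by
      intro w hw
      rw [mem_neighborFinset] at hw
      rw [mem_compl, mem_insert, not_or]
      exact ⟨hw.ne', fun hwJ => (hJ w hwJ).2 hw⟩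
    have hcard := card_le_card hsub
    rw [card_neighborFinset_eq_degree, card_compl,
      card_insert_of_notMem fun hvJ => (hJ v hvJ).1 rfl] at hcard
    have := G.degree_lt_card_verts u
    omega
  · have := hdeg x v (hJ x hx).1 fun h => (hJ x hx).2 h.symm
    omega

lemma card_edgeFinset_le_choose_add_sum_degree [DecidableEq V] (J : Finset V) :
    #G.edgeFinset ≤ (#Jᶜ).choose 2 + ∑ v ∈ J, G.degree v := by
  have hsub : G.edgeFinset ⊆
      Jᶜ.offDiag.image (Function.uncurry Sym2.mk) ∪ J.biUnion (G.incidenceFinset ·) := by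
    intro e he
    induction e with | h a b
    rw [mem_edgeFinset, mem_edgeSet] at he
    simp only [mem_union, mem_biUnion, mem_incidenceFinset, mk'_mem_incidenceSet_iff]
    by_cases ha : a ∈ J
    · exact .inr ⟨a, ha, he, .inl rfl⟩
    by_cases hb : b ∈ J
    · exact .inr ⟨b, hb, he, .inr rfl⟩
    exact .inl (mem_image.2 ⟨(a, b), by simp [ha, hb, he.ne], rfl⟩)
  calc #G.edgeFinset ≤ _ := card_le_card hsub
    _ ≤ _ := card_union_le _ _
    _ ≤ _ := by
      rw [Sym2.card_image_offDiag]
      gcongr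
      exact card_biUnion_le.trans_eq (by simp)

lemma hasCycleLen_card_of_forall_choose_lt_card_edgeFinset (hV : 3 ≤ Fintype.card V)
    (hE : ∀ j, G.minDegree ≤ j → 2 * j < Fintype.card V →
      (Fintype.card V - j).choose 2 + j ^ 2 < #G.edgeFinset) :
    HasCycleLen G (Fintype.card V) := by
  classical
  by_contra hham
  obtain ⟨H, hGH, hH⟩ := Finite.exists_le_maximal
    (p := fun H : SimpleGraph V => ¬ HasCycleLen H (Fintype.card V)) hham
  obtain ⟨J, hmin, hJ, hdeg⟩ := exists_finset_forall_degree_le_card hV hH.prop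
    fun u v huv hnadj => by
      by_contra h
      exact hnadj (hH.le_of_ge h le_sup_left (.inr ((edge_adj ..).2 ⟨.inl ⟨rfl, rfl⟩, huv⟩)))
  refine (hE #J ((minDegree_le_minDegree hGH).trans hmin) hJ).not_ge ?_
  calc #G.edgeFinset ≤ #H.edgeFinset := card_le_card (edgeFinset_mono hGH)
    _ ≤ (#Jᶜ).choose 2 + ∑ v ∈ J, H.degree v := card_edgeFinset_le_choose_add_sum_degree J
    _ ≤ (Fintype.card V - #J).choose 2 + #J ^ 2 := by
      rw [card_compl, sq]
      gcongr
      exact sum_le_card_nsmul _ _ _ hdeg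

end Hamiltonicity

section DegreeIn

variable {V : Type*} (G : SimpleGraph V) [DecidableRel G.Adj]

/-- The number of neighbours of `v` in `S`; the vertex `v` need not belong to `S`. -/
def degreeIn (S : Finset V) (v : V) : ℕ := #{w ∈ S | G.Adj v w}

/-- The degree sum of the subgraph of `G` induced by `S`, that is, twice its number of edges. -/
def degSum (S : Finset V) : ℕ := ∑ v ∈ S, degreeIn G S v

variable {G} {S : Finset V} {v : V}

lemma degreeIn_mono {T : Finset V} (h : S ⊆ T) (v : V) : degreeIn G S v ≤ degreeIn G T v :=
  card_le_card (filter_subset_filter _ h)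

lemma degreeIn_add_one_le_card (hv : v ∈ S) : degreeIn G S v + 1 ≤ #S :=
  card_lt_card (filter_ssubset.2 ⟨v, hv, G.irrefl⟩)

lemma sum_degreeIn_comm (G : SimpleGraph V) [DecidableRel G.Adj] (S T : Finset V) :
    ∑ v ∈ S, degreeIn G T v = ∑ v ∈ T, degreeIn G S v :=
  (sum_card_bipartiteAbove_eq_sum_card_bipartiteBelow G.Adj).trans <|
    sum_congr rfl fun _ _ => congrArg card <| filter_congr fun _ _ => G.adj_comm _ _

lemma degSum_le (S : Finset V) : degSum G S ≤ #S * (#S - 1) :=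
  sum_le_card_nsmul _ _ _ fun _ hv => Nat.le_sub_one_of_lt (degreeIn_add_one_le_card hv)

section

variable [DecidableEq V]

lemma degreeIn_union {T : Finset V} (h : Disjoint S T) (v : V) :
    degreeIn G (S ∪ T) v = degreeIn G S v + degreeIn G T v := by
  rw [degreeIn, filter_union, card_union_of_disjoint (disjoint_filter_filter h)]
  rfl

lemma degSum_union {T : Finset V} (h : Disjoint S T) :
    degSum G (S ∪ T) = degSum G S + degSum G T + 2 * ∑ v ∈ T, degreeIn G S v := by
  simp only [degSum, sum_union h, degreeIn_union h, sum_add_distrib, sum_degreeIn_comm G S T]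
  ring

lemma degSum_insert (h : v ∉ S) :
    degSum G (insert v S) = degSum G S + 2 * degreeIn G S v := by
  rw [insert_eq, union_comm, degSum_union (disjoint_singleton_right.2 h), sum_singleton,
    Nat.le_zero.1 (degSum_le {v}), add_zero]

lemma degreeIn_erase_self (S : Finset V) (v : V) : degreeIn G (S.erase v) v = degreeIn G S v := by
  rw [degreeIn, degreeIn, filter_erase, erase_eq_of_notMem (by simp)]

lemma degreeIn_le_degreeIn_erase_add_one (S : Finset V) (v w : V) :
    degreeIn G S v ≤ degreeIn G (S.erase w) v + 1 := by
  rw [degreeIn, degreeIn, filter_erase]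
  exact Nat.sub_le_iff_le_add.1 pred_card_le_card_erase

end

variable [Fintype V]

lemma degreeIn_univ (v : V) : degreeIn G univ v = G.degree v := by
  rw [degreeIn, ← neighborFinset_eq_filter, card_neighborFinset_eq_degree]

lemma degreeIn_le_degree (S : Finset V) (v : V) : degreeIn G S v ≤ G.degree v :=
  degreeIn_univ (G := G) v ▸ degreeIn_mono (subset_univ S) v

lemma degSum_univ : degSum G univ = 2 * #G.edgeFinset := by
  simp only [degSum, degreeIn_univ, G.sum_degrees_eq_twice_card_edges]

lemma two_mul_card_edgeFinset_le [DecidableEq V] {d : ℕ}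
    (hd : ∀ v, v ∉ S → degreeIn G S v ≤ d) :
    2 * #G.edgeFinset ≤ degSum G S + #Sᶜ * (#Sᶜ - 1) + 2 * (#Sᶜ * d) := by
  rw [← degSum_univ, ← union_compl S, degSum_union disjoint_compl_right]
  gcongr
  · exact degSum_le Sᶜ
  · exact sum_le_card_nsmul _ _ _ fun v hv => hd v (mem_compl.1 hv)

/-- Choose `S` with the largest degree sum and `w ∈ S` with fewest neighbours in `S`: replacing `w`
by another vertex cannot increase the degree sum. -/
lemma exists_finset_forall_degreeIn_erase_le [DecidableEq V] (G : SimpleGraph V)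
    [DecidableRel G.Adj] {m : ℕ} (hm : 0 < m) (hmV : m ≤ Fintype.card V) :
    ∃ S : Finset V, #S = m ∧ ∃ w ∈ S, (∀ v ∈ S, degreeIn G S w ≤ degreeIn G S v) ∧
      ∀ v, v ∉ S.erase w → degreeIn G (S.erase w) v ≤ degreeIn G S w := by
  obtain ⟨S, hS, hSmax⟩ := exists_max_image (powersetCard m univ) (degSum G)
    (powersetCard_nonempty.2 (by simpa using hmV))
  have hcard : #S = m := (mem_powersetCard.1 hS).2
  obtain ⟨w, hw, hwmin⟩ := exists_min_image S (degreeIn G S) (card_pos.1 (hcard ▸ hm))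
  refine ⟨S, hcard, w, hw, hwmin, fun v hv => ?_⟩
  have hle : degSum G (insert v (S.erase w)) ≤ degSum G (insert w (S.erase w)) := by
    rw [insert_erase hw]
    refine hSmax _ (mem_powersetCard.2 ⟨subset_univ _, ?_⟩)
    rw [card_insert_of_notMem hv, card_erase_add_one hw, hcard]
  rw [degSum_insert hv, degSum_insert (notMem_erase w S), degreeIn_erase_self] at hle
  omega

end DegreeIn

section InducedSubgraph

variable {V : Type} {G : SimpleGraph V} [DecidableRel G.Adj] {S : Finset V}

lemma degree_induce (v : (S : Set V)) : (G.induce (S : Set V)).degree v = degreeIn G S v := by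
  rw [← card_neighborFinset_eq_degree, ← card_map (.subtype (· ∈ (S : Set V))), degreeIn]
  congr 1
  ext w
  simp [and_comm]

lemma two_mul_card_edgeFinset_induce :
    2 * #(G.induce (S : Set V)).edgeFinset = degSum G S := by
  rw [← sum_degrees_eq_twice_card_edges, degSum]
  simp only [degree_induce]
  exact sum_coe_sort S (degreeIn G S)

lemma hasCycleLen_of_forall_lt_degSum (hS : 3 ≤ #S) {d : ℕ} (hd : ∀ v ∈ S, d ≤ degreeIn G S v)
    (hham : ∀ j, d ≤ j → 2 * j < #S → (#S - j) * (#S - j - 1) + 2 * j ^ 2 < degSum G S)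
    (hpan : #S ^ 2 < 2 * degSum G S) {l : ℕ} (hl : 3 ≤ l) (hlS : l ≤ #S) : HasCycleLen G l := by
  classical
  have hcard : Fintype.card (S : Set V) = #S := Fintype.card_coe S
  have : Nonempty (S : Set V) := (card_pos.1 (by omega : 0 < #S)).to_subtype
  have hmin : d ≤ (G.induce (S : Set V)).minDegree :=
    le_minDegree_of_forall_le_degree _ _ fun v => (hd v v.2).trans_eq (degree_induce v).symm
  rw [← two_mul_card_edgeFinset_induce] at hham hpan
  rw [← hcard] at hS hham hpan hlS
  refine (hasCycleLen_of_sq_card_lt_four_mul_card_edgeFinset ?_ (by linarith) hl hlS).map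
    (Embedding.induce (S : Set V))
  refine hasCycleLen_card_of_forall_choose_lt_card_edgeFinset hS fun j hj hj' => ?_
  have hj := hham j (hmin.trans hj) hj'
  rw [Nat.choose_two_right]
  omega

end InducedSubgraph

section Structure

lemma posa_bound_lt {h t d D j : ℕ} (hth : 5 * t + 16 ≤ h)
    (ht : t ^ 2 + 5 * t + 10 ≤ 2 * h) (hd : 2 ≤ d)
    (hD : h ^ 2 + 1 ≤ D + h + t ^ 2 + t + 2 * t * d) (hdj : d ≤ j) (hj : 2 * j ≤ h) :
    (h + 1 - j) * (h - j) + 2 * j ^ 2 < D := by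
  obtain ⟨i, rfl⟩ := Nat.exists_eq_add_of_le (by omega : j ≤ h)
  rw [show j + i + 1 - j = i + 1 by omega, Nat.add_sub_cancel_left]
  zify at *
  have hdj' : (t : ℤ) * d ≤ t * j := by gcongr
  nlinarith [mul_nonneg (sub_nonneg.2 (hd.trans hdj)) (sub_nonneg.2 hj),
    mul_nonneg (sub_nonneg.2 (hd.trans hdj)) (by linarith : (0 : ℤ) ≤ j + i - 4 * t - 10)]

variable {V : Type} [Fintype V] {G : SimpleGraph V} [DecidableRel G.Adj]

lemma forall_hasCycleLen_or_exists_finset_degreeIn_le_one {h t : ℕ}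
    (hV : Fintype.card V = h + 1 + t) (hth : 5 * t + 16 ≤ h) (ht : t ^ 2 + 5 * t + 10 ≤ 2 * h)
    (hE : (h - 1) ^ 2 + #{v | 0 < G.degree v} ≤ 2 * #G.edgeFinset + 1) :
    (∀ l, 3 ≤ l → l ≤ h + 1 → HasCycleLen G l) ∨
      ∃ T : Finset V, #T = h ∧ ∀ v, v ∉ T → degreeIn G T v ≤ 1 := by
  classical
  obtain ⟨S, hS, w, hw, hmin, hout⟩ :=
    exists_finset_forall_degreeIn_erase_le G (Nat.succ_pos h) (by omega)
  rcases le_or_gt (degreeIn G S w) 1 with hd | hd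
  · exact .inr ⟨S.erase w, by rw [card_erase_of_mem hw, hS, Nat.succ_sub_one],
      fun v hv => (hout v hv).trans hd⟩
  left
  set d := degreeIn G S w
  have hsupp : h + 1 ≤ #{v | 0 < G.degree v} := by
    rw [← Nat.succ_eq_add_one, ← hS]
    refine card_le_card fun v hv => mem_filter.2 ⟨mem_univ v, ?_⟩
    exact (by omega : 0 < d).trans_le ((hmin v hv).trans (degreeIn_le_degree S v))
  have hout' : ∀ v, v ∉ S → degreeIn G S v ≤ d + 1 := fun v hv =>
    (degreeIn_le_degreeIn_erase_add_one S v w).trans <|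
      Nat.succ_le_succ (hout v fun hv' => hv (mem_of_mem_erase hv'))
  have hcompl : #Sᶜ = t := by rw [card_compl, hV, hS]; omega
  have hD : h ^ 2 + 1 ≤ degSum G S + h + t ^ 2 + t + 2 * t * d := by
    have hle := two_mul_card_edgeFinset_le hout'
    rw [hcompl] at hle
    have ht1 : t * (t - 1) + t = t ^ 2 := by
      rw [Nat.mul_sub_one, sq, Nat.sub_add_cancel (Nat.le_mul_self t)]
    have hh1 : (h - 1) ^ 2 + 2 * h = h ^ 2 + 1 := by
      obtain ⟨i, rfl⟩ : ∃ i, h = i + 1 := ⟨h - 1, by omega⟩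
      rw [Nat.add_sub_cancel]
      ring
    nlinarith
  have hdh : d ≤ h := by
    have := degreeIn_add_one_le_card (G := G) hw
    omega
  intro l hl hlh
  refine hasCycleLen_of_forall_lt_degSum (by omega) hmin (fun j hdj hj => ?_) ?_ hl (by omega)
  · rw [hS, Nat.succ_eq_add_one, show h + 1 - j - 1 = h - j by omega]
    exact posa_bound_lt hth ht hd hD hdj (by omega)
  · have hdt : t * d ≤ t * h := by gcongr
    rw [hS]
    nlinarith

end Structure

section Rayleigh

open Matrix

variable {n : Type*} [Fintype n] [DecidableEq n] {A : Matrix n n ℝ}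

lemma posSemidef_algebraMap_sSup_spectrum_sub (hA : A.IsHermitian) :
    (algebraMap ℝ (Matrix n n ℝ) (sSup (spectrum ℝ A)) - A).PosSemidef := by
  refine posSemidef_iff_isHermitian_and_spectrum_nonneg.2 ⟨.sub ?_ hA, ?_⟩
  · rw [algebraMap_eq_diagonal]
    exact isHermitian_diagonal _
  · rw [← spectrum.singleton_sub_eq]
    rintro _ ⟨_, rfl, μ, hμ, rfl⟩
    exact sub_nonneg.2 (le_csSup finite_real_spectrum.bddAbove hμ)

lemma algebraMap_sub_mulVec (r : ℝ) (x : n → ℝ) :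
    (algebraMap ℝ (Matrix n n ℝ) r - A) *ᵥ x = r • x - A *ᵥ x := by
  rw [sub_mulVec, Algebra.algebraMap_eq_smul_one, smul_mulVec, one_mulVec]

lemma dotProduct_algebraMap_sub_mulVec (r : ℝ) (x : n → ℝ) :
    x ⬝ᵥ (algebraMap ℝ (Matrix n n ℝ) r - A) *ᵥ x = r * (x ⬝ᵥ x) - x ⬝ᵥ A *ᵥ x := by
  rw [algebraMap_sub_mulVec, dotProduct_sub, dotProduct_smul, smul_eq_mul]

lemma dotProduct_mulVec_le_sSup_spectrum (hA : A.IsHermitian) (x : n → ℝ) :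
    x ⬝ᵥ A *ᵥ x ≤ sSup (spectrum ℝ A) * (x ⬝ᵥ x) := by
  have h := (posSemidef_algebraMap_sSup_spectrum_sub hA).dotProduct_mulVec_nonneg x
  rwa [star_trivial, dotProduct_algebraMap_sub_mulVec, sub_nonneg] at h

lemma mulVec_eq_sSup_spectrum_smul (hA : A.IsHermitian) {x : n → ℝ}
    (hx : sSup (spectrum ℝ A) * (x ⬝ᵥ x) ≤ x ⬝ᵥ A *ᵥ x) :
    A *ᵥ x = sSup (spectrum ℝ A) • x := by
  have h := (posSemidef_algebraMap_sSup_spectrum_sub hA).dotProduct_mulVec_zero_iff x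
  rw [star_trivial, dotProduct_algebraMap_sub_mulVec, algebraMap_sub_mulVec, sub_eq_zero,
    sub_eq_zero] at h
  exact (h.1 (hx.antisymm (dotProduct_mulVec_le_sSup_spectrum hA x))).symm

lemma exists_mulVec_eq_sSup_spectrum_smul [Nonempty n] (hA : A.IsHermitian) :
    ∃ x : n → ℝ, x ≠ 0 ∧ A *ᵥ x = sSup (spectrum ℝ A) • x := by
  have hne : (spectrum ℝ A).Nonempty :=
    ⟨_, hA.eigenvalues_mem_spectrum_real (Classical.arbitrary n)⟩
  have hmem := hne.csSup_mem finite_real_spectrum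
  rw [hA.spectrum_real_eq_range_eigenvalues] at hmem ⊢
  obtain ⟨i, hi⟩ := hmem
  refine ⟨(hA.eigenvectorBasis i).ofLp, fun h0 => ?_, hi ▸ hA.mulVec_eigenvectorBasis i⟩
  exact hA.eigenvectorBasis.orthonormal.ne_zero i (WithLp.ofLp_injective 2 h0)

lemma exists_nonneg_mulVec_eq_sSup_spectrum_smul [Nonempty n] (hA : A.IsHermitian)
    (hA0 : ∀ i j, 0 ≤ A i j) :
    ∃ x : n → ℝ, 0 ≤ x ∧ x ≠ 0 ∧ A *ᵥ x = sSup (spectrum ℝ A) • x := by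
  obtain ⟨x, hx0, hx⟩ := exists_mulVec_eq_sSup_spectrum_smul hA
  refine ⟨|x|, abs_nonneg x, by simpa [funext_iff] using hx0, mulVec_eq_sSup_spectrum_smul hA ?_⟩
  calc sSup (spectrum ℝ A) * (|x| ⬝ᵥ |x|) = sSup (spectrum ℝ A) * (x ⬝ᵥ x) := by
        simp only [dotProduct, Pi.abs_apply, abs_mul_abs_self]
    _ = ∑ i, ∑ j, x i * (A i j * x j) := by
        rw [← smul_eq_mul, ← dotProduct_smul, ← hx]
        simp only [dotProduct, mulVec, mul_sum]
    _ ≤ ∑ i, ∑ j, |x i| * (A i j * |x j|) := by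
        refine sum_le_sum fun i _ => sum_le_sum fun j _ => (le_abs_self _).trans_eq ?_
        rw [abs_mul, abs_mul, abs_of_nonneg (hA0 i j)]
    _ = |x| ⬝ᵥ A *ᵥ |x| := by
        simp only [dotProduct, mulVec, mul_sum, Pi.abs_apply]

end Rayleigh

section SpecRad

open Matrix

section Fintype

variable {V : Type} [Fintype V] {G : SimpleGraph V}

lemma specRad_eq [DecidableEq V] [DecidableRel G.Adj] :
    specRad G = sSup (spectrum ℝ (G.adjMatrix ℝ)) := by
  unfold specRad
  congr!

variable [DecidableRel G.Adj]

lemma dotProduct_adjMatrix_mulVec_le (x : V → ℝ) :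
    x ⬝ᵥ G.adjMatrix ℝ *ᵥ x ≤ specRad G * (x ⬝ᵥ x) := by
  classical
  exact specRad_eq (G := G) ▸ dotProduct_mulVec_le_sSup_spectrum (G.isHermitian_adjMatrix ℝ) x

lemma adjMatrix_mulVec_eq_specRad_smul {x : V → ℝ}
    (hx : specRad G * (x ⬝ᵥ x) ≤ x ⬝ᵥ G.adjMatrix ℝ *ᵥ x) :
    G.adjMatrix ℝ *ᵥ x = specRad G • x := by
  classical
  rw [specRad_eq] at hx ⊢
  exact mulVec_eq_sSup_spectrum_smul (G.isHermitian_adjMatrix ℝ) hx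

variable (G) in
lemma exists_nonneg_adjMatrix_mulVec_eq_specRad_smul [Nonempty V] :
    ∃ x : V → ℝ, 0 ≤ x ∧ x ≠ 0 ∧ G.adjMatrix ℝ *ᵥ x = specRad G • x := by
  classical
  rw [specRad_eq]
  refine exists_nonneg_mulVec_eq_sSup_spectrum_smul (G.isHermitian_adjMatrix ℝ) fun v w => ?_
  rw [adjMatrix_apply]
  positivity

lemma exists_sq_specRad_le_sum_degree [Nonempty V] :
    ∃ u, specRad G ^ 2 ≤ ∑ w ∈ G.neighborFinset u, (G.degree w : ℝ) := by
  obtain ⟨x, hx0, hx1, hx⟩ := exists_nonneg_adjMatrix_mulVec_eq_specRad_smul G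
  have hxv : ∀ v, ∑ w ∈ G.neighborFinset v, x w = specRad G * x v := fun v => by
    rw [← adjMatrix_mulVec_apply, hx, Pi.smul_apply, smul_eq_mul]
  obtain ⟨u, -, hu⟩ := exists_max_image univ x univ_nonempty
  have hxu : 0 < x u := by
    obtain ⟨v, hv⟩ := Function.ne_iff.1 hx1
    exact ((hx0 v).lt_of_ne' hv).trans_le (hu v (mem_univ v))
  refine ⟨u, le_of_mul_le_mul_right ?_ hxu⟩
  calc specRad G ^ 2 * x u = ∑ w ∈ G.neighborFinset u, ∑ v ∈ G.neighborFinset w, x v := by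
        simp only [hxv, ← mul_sum]
        ring
    _ ≤ ∑ w ∈ G.neighborFinset u, (G.degree w : ℝ) * x u := by
        gcongr with w _
        rw [← nsmul_eq_mul]
        exact sum_le_card_nsmul _ _ _ fun v _ => hu v (mem_univ v)
    _ = (∑ w ∈ G.neighborFinset u, (G.degree w : ℝ)) * x u := (sum_mul ..).symm

variable (G) in
lemma sum_degree_neighborFinset_add_card_le (u : V) :
    ∑ w ∈ G.neighborFinset u, G.degree w + #{v | 0 < G.degree v} ≤ 2 * #G.edgeFinset + 1 := by
  classical
  set N := insert u (G.neighborFinset u)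
  have hu : u ∉ G.neighborFinset u := G.notMem_neighborFinset_self u
  have hcard : #{v | 0 < G.degree v} ≤ #N + ∑ v ∈ Nᶜ, G.degree v := by
    calc #{v | 0 < G.degree v}
        = ∑ v ∈ N, (if 0 < G.degree v then 1 else 0) +
            ∑ v ∈ Nᶜ, if 0 < G.degree v then 1 else 0 := by rw [card_filter, sum_add_sum_compl]
      _ ≤ ∑ _v ∈ N, 1 + ∑ v ∈ Nᶜ, G.degree v := by gcongr <;> split_ifs <;> omega
      _ = #N + ∑ v ∈ Nᶜ, G.degree v := by rw [card_eq_sum_ones]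
  have hsum : 2 * #G.edgeFinset = G.degree u + ∑ w ∈ G.neighborFinset u, G.degree w +
      ∑ v ∈ Nᶜ, G.degree v := by
    rw [← sum_degrees_eq_twice_card_edges, ← sum_insert (f := fun v => G.degree v) hu,
      sum_add_sum_compl]
  rw [card_insert_of_notMem hu, card_neighborFinset_eq_degree] at hcard
  omega

lemma sq_specRad_add_card_le [Nonempty V] :
    specRad G ^ 2 + #{v | 0 < G.degree v} ≤ 2 * #G.edgeFinset + 1 := by
  obtain ⟨u, hu⟩ := exists_sq_specRad_le_sum_degree (G := G)
  grw [hu]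
  exact_mod_cast sum_degree_neighborFinset_add_card_le G u

end Fintype

section Finite

variable {V : Type} [Finite V] {G : SimpleGraph V}

lemma specRad_congr {W : Type} [Finite W] {H : SimpleGraph W} (e : G ≃g H) :
    specRad G = specRad H := by
  classical
  cases nonempty_fintype V
  cases nonempty_fintype W
  rw [specRad_eq, specRad_eq, ← e.reindex_adjMatrix ℝ]
  exact congrArg sSup (AlgEquiv.spectrum_eq (reindexAlgEquiv ℝ ℝ e.toEquiv) _).symm

lemma degSum_le_specRad_mul_card [DecidableRel G.Adj] (S : Finset V) :
    (degSum G S : ℝ) ≤ specRad G * #S := by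
  classical
  cases nonempty_fintype V
  convert dotProduct_adjMatrix_mulVec_le (G := G) (fun v => if v ∈ S then 1 else 0) using 1
  · simp [dotProduct, adjMatrix_mulVec_apply, degSum, degreeIn, neighborFinset_eq_filter,
      filter_inter]
  · simp [dotProduct]

lemma card_sub_one_le_specRad {S : Finset V} (hS : S.Nonempty) (hG : G.IsClique (S : Set V)) :
    (#S : ℝ) - 1 ≤ specRad G := by
  classical
  have hdeg : ∀ v ∈ S, #S - 1 ≤ degreeIn G S v := fun v hv => by
    rw [← card_erase_of_mem hv]
    exact card_le_card fun w hw => mem_filter.2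
      ⟨mem_of_mem_erase hw, hG hv (mem_of_mem_erase hw) (ne_of_mem_erase hw).symm⟩
  refine le_of_mul_le_mul_right ?_ (Nat.cast_pos.2 hS.card_pos)
  calc ((#S : ℝ) - 1) * #S = ((#S • (#S - 1) : ℕ) : ℝ) := by
        rw [smul_eq_mul, Nat.cast_mul, Nat.cast_pred hS.card_pos, mul_comm]
    _ ≤ degSum G S := Nat.cast_le.2 (card_nsmul_le_sum _ _ _ hdeg)
    _ ≤ specRad G * #S := degSum_le_specRad_mul_card S

end Finite

end SpecRad

section PerronVector

open Matrix

variable {V : Type*} [Fintype V] {G H : SimpleGraph V} [DecidableRel G.Adj] [DecidableRel H.Adj]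
  {x : V → ℝ}

lemma forall_pos_of_adjMatrix_mulVec_eq_smul (hG : G.Preconnected) (hx0 : 0 ≤ x) (hx1 : x ≠ 0)
    {r : ℝ} (hx : G.adjMatrix ℝ *ᵥ x = r • x) (v : V) : 0 < x v := by
  have hadj : ∀ {a b}, G.Adj a b → x a = 0 → x b = 0 := fun {a b} hab ha => by
    have hsum := congrFun hx a
    rw [adjMatrix_mulVec_apply, Pi.smul_apply, ha, smul_zero] at hsum
    exact (sum_eq_zero_iff_of_nonneg fun c _ => hx0 c).1 hsum b ((G.mem_neighborFinset a b).2 hab)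
  refine (hx0 v).lt_of_ne' fun hv => hx1 (funext fun b => ?_)
  obtain ⟨p⟩ := hG v b
  induction p with
  | nil => exact hv
  | cons hab _ ih => exact ih (hadj hab hv)

lemma adj_of_adjMatrix_mulVec_apply_eq (hx : ∀ v, 0 < x v) {a b : V}
    (hGH : ∀ b, G.Adj a b → H.Adj a b)
    (h : (G.adjMatrix ℝ *ᵥ x) a = (H.adjMatrix ℝ *ᵥ x) a) (hab : H.Adj a b) : G.Adj a b := by
  by_contra hb
  simp only [adjMatrix_mulVec_apply] at h
  refine h.not_lt (sum_lt_sum_of_subset (fun c hc => ?_) ((H.mem_neighborFinset a b).2 hab) ?_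
    (hx b) fun c _ _ => (hx c).le)
  · exact (H.mem_neighborFinset a c).2 (hGH c ((G.mem_neighborFinset a c).1 hc))
  · rwa [G.mem_neighborFinset]

lemma dotProduct_mulVec_eq_sum_blocks [DecidableEq V] {A : Matrix V V ℝ} (hA : A.IsSymm)
    (x : V → ℝ) (T : Finset V) :
    x ⬝ᵥ A *ᵥ x = ∑ a ∈ T, x a * ∑ b ∈ T, A a b * x b + ∑ a ∈ Tᶜ, x a * ∑ b ∈ Tᶜ, A a b * x b +
      2 * ∑ a ∈ Tᶜ, x a * ∑ b ∈ T, A a b * x b := by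
  have hcross : ∑ a ∈ T, x a * ∑ b ∈ Tᶜ, A a b * x b = ∑ a ∈ Tᶜ, x a * ∑ b ∈ T, A a b * x b := by
    simp only [mul_sum]
    rw [sum_comm]
    refine sum_congr rfl fun a _ => sum_congr rfl fun b _ => ?_
    rw [hA.apply]
    ring
  simp only [dotProduct, mulVec, ← sum_add_sum_compl T, mul_add, sum_add_distrib, hcross]
  ring

end PerronVector

section TwoCliques

open Matrix

/-- The union of a clique on `T` and a clique on `Tᶜ ∪ {w}`. For `w ∈ T` the two cliques share
exactly the vertex `w`, which makes this a labelled version of `L_{n,k}` with `#T = n - k`. -/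
def twoCliques {V : Type*} (T : Finset V) (w : V) : SimpleGraph V where
  Adj a b := a ≠ b ∧ (a = w ∨ b = w ∨ (a ∈ T ↔ b ∈ T))
  symm := ⟨fun _ _ h => ⟨h.1.symm, by tauto⟩⟩
  loopless := ⟨fun _ h => h.1 rfl⟩

section

variable {V : Type*} {T : Finset V} {w a b : V}

lemma twoCliques_adj :
    (twoCliques T w).Adj a b ↔ a ≠ b ∧ (a = w ∨ b = w ∨ (a ∈ T ↔ b ∈ T)) :=
  Iff.rfl

instance [DecidableEq V] : DecidableRel (twoCliques T w).Adj :=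
  fun _ _ => decidable_of_iff' _ twoCliques_adj

lemma twoCliques_adj_left : (twoCliques T w).Adj w b ↔ w ≠ b := by
  simp [twoCliques_adj]

lemma twoCliques_adj_iff_eq (hw : w ∈ T) (ha : a ∉ T) (hb : b ∈ T) :
    (twoCliques T w).Adj a b ↔ b = w := by
  have haw : a ≠ w := fun h => ha (h ▸ hw)
  have hab : a ≠ b := fun h => ha (h ▸ hb)
  simp [twoCliques_adj, ha, hb, haw, hab]

lemma preconnected_twoCliques : (twoCliques T w).Preconnected := by
  have h : ∀ b, (twoCliques T w).Reachable w b := fun b => by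
    rcases eq_or_ne w b with rfl | hb
    · exact .rfl
    · exact (twoCliques_adj_left.2 hb).reachable
  exact fun a b => (h a).symm.trans (h b)

lemma isClique_twoCliques : (twoCliques T w).IsClique (T : Set V) :=
  fun _ ha _ hb hab => ⟨hab, .inr (.inr (iff_of_true ha hb))⟩

lemma nonempty_twoCliques_iso [Fintype V] {W : Type*} [Fintype W] {T' : Finset W} {w' : W}
    (hw : w ∈ T) (hw' : w' ∈ T') (hT : #T = #T') (hVW : Fintype.card V = Fintype.card W) :
    Nonempty (twoCliques T w ≃g twoCliques T' w') := by
  classical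
  let e₀ : T ≃ T' := equivOfCardEq hT
  let e₁ : T ≃ T' := e₀.trans (Equiv.swap (e₀ ⟨w, hw⟩) ⟨w', hw'⟩)
  let e₂ : {a // a ∉ T} ≃ {b // b ∉ T'} := Fintype.equivOfCardEq <| by
    rw [Fintype.card_subtype_compl, Fintype.card_subtype_compl, Fintype.card_coe, Fintype.card_coe,
      hT, hVW]
  let e : V ≃ W :=
    (Equiv.sumCompl (· ∈ T)).symm.trans ((Equiv.sumCongr e₁ e₂).trans (Equiv.sumCompl (· ∈ T')))
  have hmem : ∀ a, e a ∈ T' ↔ a ∈ T := fun a => by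
    by_cases ha : a ∈ T
    · simp [e, ha]
    · simpa [e, ha] using (e₂ ⟨a, ha⟩).2
  have hew : e w = w' := by simp [e, e₁, hw]
  refine ⟨e, fun {a b} => ?_⟩
  simp only [twoCliques_adj, hmem, ← hew, e.injective.eq_iff, ne_eq]

end

section Comparison

variable {V : Type*} {G : SimpleGraph V} [DecidableRel G.Adj] {T : Finset V} {w : V} {x : V → ℝ}

lemma sum_adjMatrix_mul_le_of_degreeIn_le_one (hw : 0 ≤ x w) (hmax : ∀ b ∈ T, x b ≤ x w) {a : V}
    (ha : degreeIn G T a ≤ 1) : ∑ b ∈ T, G.adjMatrix ℝ a b * x b ≤ x w := by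
  simp only [adjMatrix_apply, ite_mul, one_mul, zero_mul, ← sum_filter]
  calc ∑ b ∈ T with G.Adj a b, x b ≤ degreeIn G T a • x w :=
        sum_le_card_nsmul _ _ _ fun b hb => hmax b (mem_of_mem_filter b hb)
    _ ≤ 1 • x w := nsmul_le_nsmul_left hw ha
    _ = x w := one_nsmul _

variable [DecidableEq V]

lemma sum_adjMatrix_twoCliques_mul (hw : w ∈ T) {a : V} (ha : a ∉ T) :
    ∑ b ∈ T, (twoCliques T w).adjMatrix ℝ a b * x b = x w := by
  rw [sum_eq_single_of_mem w hw fun b hb hbw => ?_, adjMatrix_apply,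
    if_pos ((twoCliques_adj_iff_eq hw ha hw).2 rfl), one_mul]
  rw [adjMatrix_apply, if_neg (mt (twoCliques_adj_iff_eq hw ha hb).1 hbw), zero_mul]

lemma adjMatrix_le_adjMatrix_twoCliques {a b : V} (h : a ∈ T ↔ b ∈ T) :
    G.adjMatrix ℝ a b ≤ (twoCliques T w).adjMatrix ℝ a b := by
  rw [adjMatrix_apply, adjMatrix_apply]
  split_ifs with hG hH
  · exact le_rfl
  · exact absurd ⟨hG.ne, .inr (.inr h)⟩ hH
  · exact zero_le_one
  · exact le_rfl

variable [Fintype V]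

/-- Passing to `twoCliques T w` adds edges inside `T` and inside `Tᶜ`, and moves the edge from each
`a ∉ T` to `T`, if there is one, to the vertex of `T` of largest weight. -/
lemma dotProduct_adjMatrix_mulVec_le_twoCliques (hd : ∀ v, v ∉ T → degreeIn G T v ≤ 1) (hw : w ∈ T)
    (hx : 0 ≤ x) (hmax : ∀ b ∈ T, x b ≤ x w) :
    x ⬝ᵥ G.adjMatrix ℝ *ᵥ x ≤ x ⬝ᵥ (twoCliques T w).adjMatrix ℝ *ᵥ x := by
  have hblock : ∀ S : Finset V, (∀ a ∈ S, ∀ b ∈ S, (a ∈ T ↔ b ∈ T)) →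
      ∑ a ∈ S, x a * ∑ b ∈ S, G.adjMatrix ℝ a b * x b ≤
        ∑ a ∈ S, x a * ∑ b ∈ S, (twoCliques T w).adjMatrix ℝ a b * x b := fun S hS =>
    sum_le_sum fun a ha => mul_le_mul_of_nonneg_left (sum_le_sum fun b hb =>
      mul_le_mul_of_nonneg_right (adjMatrix_le_adjMatrix_twoCliques (hS a ha b hb)) (hx b)) (hx a)
  rw [dotProduct_mulVec_eq_sum_blocks (G.isSymm_adjMatrix) x T,
    dotProduct_mulVec_eq_sum_blocks ((twoCliques T w).isSymm_adjMatrix) x T]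
  refine add_le_add (add_le_add ?_ ?_) (mul_le_mul_of_nonneg_left ?_ zero_le_two)
  · exact hblock T fun a ha b hb => iff_of_true ha hb
  · exact hblock Tᶜ fun a ha b hb => iff_of_false (mem_compl.1 ha) (mem_compl.1 hb)
  · refine sum_le_sum fun a ha => mul_le_mul_of_nonneg_left ?_ (hx a)
    rw [mem_compl] at ha
    exact (sum_adjMatrix_mul_le_of_degreeIn_le_one (hx w) hmax (hd a ha)).trans_eq
      (sum_adjMatrix_twoCliques_mul hw ha).symm

lemma eq_twoCliques_of_adjMatrix_mulVec_eq (hd : ∀ v, v ∉ T → degreeIn G T v ≤ 1) (hw : w ∈ T)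
    (hx : ∀ v, 0 < x v) (h : G.adjMatrix ℝ *ᵥ x = (twoCliques T w).adjMatrix ℝ *ᵥ x) :
    G = twoCliques T w := by
  have hGw : ∀ b, w ≠ b → G.Adj w b := fun b hb =>
    adj_of_adjMatrix_mulVec_apply_eq hx (fun c hc => twoCliques_adj_left.2 hc.ne) (congrFun h w)
      (twoCliques_adj_left.2 hb)
  have hout : ∀ {a b}, a ∉ T → b ∈ T → G.Adj a b → b = w := fun {a b} ha hb hab =>
    card_le_one.1 (hd a ha) b (mem_filter.2 ⟨hb, hab⟩) w
      (mem_filter.2 ⟨hw, (hGw a fun h => ha (h ▸ hw)).symm⟩)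
  have hle : G ≤ twoCliques T w := fun a b hab => by
    refine ⟨hab.ne, ?_⟩
    by_cases ha : a ∈ T <;> by_cases hb : b ∈ T
    · exact .inr (.inr (iff_of_true ha hb))
    · exact .inl (hout hb ha hab.symm)
    · exact .inr (.inl (hout ha hb hab))
    · exact .inr (.inr (iff_of_false ha hb))
  exact hle.antisymm fun a b hab =>
    adj_of_adjMatrix_mulVec_apply_eq hx (fun c hc => hle hc) (congrFun h a) hab

end Comparison

lemma exists_specRad_lt_specRad_twoCliques_or_eq {V : Type} [Finite V] {G : SimpleGraph V}
    [DecidableRel G.Adj] {T : Finset V} (hT : T.Nonempty)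
    (hd : ∀ v, v ∉ T → degreeIn G T v ≤ 1) :
    ∃ w ∈ T, specRad G < specRad (twoCliques T w) ∨ G = twoCliques T w := by
  classical
  cases nonempty_fintype V
  have : Nonempty V := hT.to_type
  obtain ⟨x, hx0, hx1, hx⟩ := exists_nonneg_adjMatrix_mulVec_eq_specRad_smul G
  obtain ⟨w, hw, hmax⟩ := exists_max_image T x hT
  refine ⟨w, hw, or_iff_not_imp_left.2 fun hlt => ?_⟩
  have hQG : x ⬝ᵥ G.adjMatrix ℝ *ᵥ x = specRad G * (x ⬝ᵥ x) := by
    rw [hx, dotProduct_smul, smul_eq_mul]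
  have hQ := dotProduct_adjMatrix_mulVec_le_twoCliques hd hw hx0 hmax
  have hxx : 0 < x ⬝ᵥ x := by
    simpa only [star_trivial] using dotProduct_star_self_pos_iff.2 hx1
  have hρ : specRad G = specRad (twoCliques T w) :=
    le_antisymm (le_of_mul_le_mul_right
      (hQG.ge.trans (hQ.trans (dotProduct_adjMatrix_mulVec_le x))) hxx) (not_lt.1 hlt)
  have hxH : (twoCliques T w).adjMatrix ℝ *ᵥ x = specRad (twoCliques T w) • x :=
    adjMatrix_mulVec_eq_specRad_smul (hρ ▸ hQG.ge.trans hQ)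
  exact eq_twoCliques_of_adjMatrix_mulVec_eq hd hw
    (forall_pos_of_adjMatrix_mulVec_eq_smul preconnected_twoCliques hx0 hx1 hxH)
    (by rw [hx, hxH, hρ])

end TwoCliques

section Lgraph

variable {n k : ℕ}

lemma Lgraph_eq_twoCliques (hk : k < n) :
    Lgraph n k = twoCliques ({i | i.val < n - k} : Finset (Fin n)) ⟨0, by omega⟩ := by
  ext a b
  simp only [Lgraph, fromRel_adj, twoCliques_adj, mem_filter_univ, Fin.ext_iff]
  omega

lemma nonempty_twoCliques_iso_Lgraph {V : Type*} [Fintype V] {T : Finset V} {w : V} (hk : k < n)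
    (hV : Fintype.card V = n) (hT : #T = n - k) (hw : w ∈ T) :
    Nonempty (twoCliques T w ≃g Lgraph n k) := by
  rw [Lgraph_eq_twoCliques hk]
  refine nonempty_twoCliques_iso hw (by simp; omega) ?_ (by rw [hV, Fintype.card_fin])
  rw [hT, Fin.card_filter_val_lt, min_eq_right (n.sub_le k)]

lemma sub_sub_one_le_specRad_Lgraph (hk : k < n) :
    ((n - k - 1 : ℕ) : ℝ) ≤ specRad (Lgraph n k) := by
  classical
  have hle := card_sub_one_le_specRad (S := ({i | i.val < n - k} : Finset (Fin n)))
    ⟨⟨0, by omega⟩, by simp; omega⟩ (Lgraph_eq_twoCliques hk ▸ isClique_twoCliques)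
  rwa [Fin.card_filter_val_lt, min_eq_right (n.sub_le k), ← Nat.cast_pred (by omega)] at hle

end Lgraph

theorem spectral_large_cycles_general {V : Type} [Fintype V] (k n : ℕ) (G : SimpleGraph V)
    (hV : Fintype.card V = n) (hk : 1 ≤ k) (hn1 : 6 * k + 11 ≤ n) (hn2 : (k + 2) * (k + 3) ≤ 2 * n)
    (hr : specRad (Lgraph n k) ≤ specRad G) :
    (∀ l : ℕ, 3 ≤ l → l ≤ n - k + 1 → HasCycleLen G l) ∨ Nonempty (G ≃g Lgraph n k) := by
  classical
  have hkn : k < n := by omega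
  have : Nonempty V := Fintype.card_pos_iff.1 (by omega)
  obtain ⟨t, rfl⟩ := Nat.exists_eq_add_of_le' hk
  have hE : (n - (t + 1) - 1) ^ 2 + #{v | 0 < G.degree v} ≤ 2 * #G.edgeFinset + 1 := by
    have hρ := (sub_sub_one_le_specRad_Lgraph hkn).trans hr
    have hHong := sq_specRad_add_card_le (G := G)
    grw [← hρ] at hHong
    exact_mod_cast hHong
  have ht : t ^ 2 + 5 * t + 10 ≤ 2 * (n - (t + 1)) := by
    rw [show (t + 1 + 2) * (t + 1 + 3) = t ^ 2 + 7 * t + 12 by ring] at hn2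
    omega
  refine (forall_hasCycleLen_or_exists_finset_degreeIn_le_one (by omega) (by omega) ht hE).imp id ?_
  rintro ⟨T, hT, hd⟩
  obtain ⟨w, hw, hlt | rfl⟩ :=
    exists_specRad_lt_specRad_twoCliques_or_eq (card_pos.1 (by omega)) hd
  · obtain ⟨e⟩ := nonempty_twoCliques_iso_Lgraph hkn hV hT hw
    exact absurd (specRad_congr e ▸ hr) hlt.not_ge
  · exact nonempty_twoCliques_iso_Lgraph hkn hV hT hw

/-- Theorem 1.6 (a): spectral radius condition for cycles of consecutive lengths. -/
theorem spectral_large_cycles (k n : ℕ) (G : SimpleGraph (Fin n)) (hk : 1 ≤ k)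
    (hn1 : 6 * k + 11 ≤ n) (hn2 : (k + 3) * (k + 4) / 2 ≤ n)
    (hr : specRad (Lgraph n k) ≤ specRad G) :
    (∀ l : ℕ, 3 ≤ l → l ≤ n - k + 1 → HasCycleLen G l) ∨
      Nonempty (G ≃g Lgraph n k) := by
  refine spectral_large_cycles_general k n G (Fintype.card_fin n) hk hn1 ?_ hr
  have hexp : (k + 3) * (k + 4) = (k + 2) * (k + 3) + 2 * (k + 3) := by ring
  omega
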